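/- For all positive integers a and b, R⁺(a,b) = (1/2)^{a+b} / (max(a,b) · B(a,b)); in particular R⁺(a,b) > 0. -/

import Mathlib

/-- The Beta function `B(a,b) = ∫₀¹ t^(a-1) (1-t)^(b-1) dt`. -/
noncomputable def betaFn (a b : ℝ) : ℝ := ∫ t in (0:ℝ)..1, t ^ (a - 1) * (1 - t) ^ (b - 1)

/-- `I(a,b)`: the probability that a `Beta(a,b)` random variable is `≥ 1/2`. -/
noncomputable def I (a b : ℝ) : ℝ :=
  (1 / betaFn a b) * ∫ t in (1/2 : ℝ)..1, t ^ (a - 1) * (1 - t) ^ (b - 1)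

/-- `h(x) = max (x, 1-x)`. -/
noncomputable def hFn (x : ℝ) : ℝ := max x (1 - x)

/-- Expected stage-wise reward. -/
noncomputable def R (a b : ℝ) : ℝ :=
  a / (a + b) * (hFn (I (a + 1) b) - hFn (I a b)) +
    b / (a + b) * (hFn (I a (b + 1)) - hFn (I a b))

/-- Optimistic knowledge-gradient reward. -/
noncomputable def Rplus (a b : ℝ) : ℝ :=
  max (hFn (I (a + 1) b) - hFn (I a b)) (hFn (I a (b + 1)) - hFn (I a b))

/-- Pessimistic knowledge-gradient reward. -/
noncomputable def Rminus (a b : ℝ) : ℝ :=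
  min (hFn (I (a + 1) b) - hFn (I a b)) (hFn (I a (b + 1)) - hFn (I a b))

/-!
Integrating the derivative of `t ^ a * (1 - t) ^ b` over `[1/2, 1]` gives
`I (a + 1) b = I a b + (1/2) ^ (a + b) / (a * betaFn a b)`, and the reflection `t ↦ 1 - t` gives
`I b a = 1 - I a b`. By this symmetry one may assume `b ≤ a`. Then `1/2 ≤ I a b`, so moving to
`(a + 1, b)` changes `hFn` by exactly the increment above. Moving to `(a, b + 1)` decreases `I` and
may take it below `1/2`, but `hFn` gains no more than in the first move because
`1 - I a (b + 1) = I (b + 1) a ≤ I (a + 1) b`.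
-/

open MeasureTheory Set

/-- The upper incomplete Beta function `∫_c^1 t^(a-1) (1-t)^(b-1) dt`. At `c = 1/2` it is the
numerator of `I a b`. -/
noncomputable def upperBeta (c a b : ℝ) : ℝ := ∫ t in c..1, t ^ (a - 1) * (1 - t) ^ (b - 1)

section UpperBeta

variable {a b c r : ℝ}

theorem intervalIntegrable_upperBeta (a : ℝ) (hc : 0 < c) (hb : 0 < b) :
    IntervalIntegrable (fun t : ℝ ↦ t ^ (a - 1) * (1 - t) ^ (b - 1)) volume c 1 := by
  have hright : IntervalIntegrable (fun t : ℝ ↦ (1 - t) ^ (b - 1)) volume c 1 := by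
    simpa only [sub_sub_cancel, sub_zero] using
      (intervalIntegral.intervalIntegrable_rpow' (a := 1 - c) (b := 0)
        (show -1 < b - 1 by linarith)).comp_sub_left 1
  refine hright.continuousOn_mul (continuousOn_id.rpow_const fun t ht ↦ Or.inl ?_)
  exact ((lt_min hc one_pos).trans_le ht.1).ne'

theorem upperBeta_pos (a : ℝ) (hc₀ : 0 < c) (hc₁ : c < 1) (hb : 0 < b) : 0 < upperBeta c a b :=
  intervalIntegral.intervalIntegral_pos_of_pos_on (intervalIntegrable_upperBeta a hc₀ hb)
    (fun _ ht ↦ mul_pos (Real.rpow_pos_of_pos (hc₀.trans ht.1) _)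
      (Real.rpow_pos_of_pos (sub_pos.2 ht.2) _)) hc₁

theorem upperBeta_add_upperBeta_swap (hc₀ : 0 < c) (hc₁ : c < 1) (ha : 0 < a) (hb : 0 < b) :
    upperBeta c a b + upperBeta (1 - c) b a = betaFn a b := by
  have hupper := intervalIntegrable_upperBeta a hc₀ hb
  have hlower : IntervalIntegrable (fun t : ℝ ↦ t ^ (a - 1) * (1 - t) ^ (b - 1)) volume 0 c := by
    simpa only [sub_sub_cancel, sub_self, mul_comm] using
      ((intervalIntegrable_upperBeta b (sub_pos.2 hc₁) ha).comp_sub_left 1).symm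
  have hreflect : upperBeta (1 - c) b a = ∫ t in (0 : ℝ)..c, t ^ (a - 1) * (1 - t) ^ (b - 1) := by
    simpa only [upperBeta, sub_sub_cancel, sub_zero, mul_comm] using
      (intervalIntegral.integral_comp_sub_left (a := 0) (b := c)
        (fun t : ℝ ↦ t ^ (b - 1) * (1 - t) ^ (a - 1)) 1).symm
  rw [hreflect, add_comm]
  exact intervalIntegral.integral_add_adjacent_intervals hlower hupper

theorem upperBeta_add_one_left_add_add_one_right (a : ℝ) (hc₀ : 0 < c) (hc₁ : c ≤ 1)
    (hb : 0 < b) : upperBeta c (a + 1) b + upperBeta c a (b + 1) = upperBeta c a b := by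
  unfold upperBeta
  rw [← intervalIntegral.integral_add (intervalIntegrable_upperBeta (a + 1) hc₀ hb)
    (intervalIntegrable_upperBeta a hc₀ (by positivity))]
  refine intervalIntegral.integral_congr_Ioo_of_le hc₁ fun t ht ↦ ?_
  have ht₀ : t ≠ 0 := (hc₀.trans ht.1).ne'
  have ht₁ : 1 - t ≠ 0 := (sub_pos.2 ht.2).ne'
  simp only [add_sub_right_comm, Real.rpow_add_one ht₀, Real.rpow_add_one ht₁]
  ring

theorem mul_upperBeta_add_one_left_sub (a : ℝ) (hc₀ : 0 < c) (hc₁ : c ≤ 1) (hb : 0 < b) :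
    b * upperBeta c (a + 1) b - a * upperBeta c a (b + 1) = c ^ a * (1 - c) ^ b := by
  have hint₁ := (intervalIntegrable_upperBeta (a + 1) hc₀ hb).const_mul b
  have hint₂ := (intervalIntegrable_upperBeta a hc₀ (by positivity : 0 < b + 1)).const_mul a
  have hcont : ContinuousOn (fun t : ℝ ↦ -(t ^ a * (1 - t) ^ b)) (Icc c 1) :=
    ((continuousOn_id.rpow_const fun t ht ↦ Or.inl (hc₀.trans_le ht.1).ne').mul
      ((continuousOn_const.sub continuousOn_id).rpow_const fun _ _ ↦ Or.inr hb.le)).neg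
  unfold upperBeta
  rw [← intervalIntegral.integral_const_mul, ← intervalIntegral.integral_const_mul,
    ← intervalIntegral.integral_sub hint₁ hint₂,
    intervalIntegral.integral_eq_sub_of_hasDerivAt_of_le hc₁ hcont ?_ (hint₁.sub hint₂)]
  · simp [Real.zero_rpow hb.ne']
  · intro t ht
    have hleft := Real.hasDerivAt_rpow_const (p := a) (Or.inl (hc₀.trans ht.1).ne')
    have hright := ((hasDerivAt_id t).const_sub 1).rpow_const (p := b)
      (Or.inl (sub_pos.2 ht.2).ne')
    refine (hleft.mul hright).neg.congr_deriv ?_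
    simp only [add_sub_cancel_right, id]
    ring

theorem add_mul_upperBeta_add_one_left (a : ℝ) (hc₀ : 0 < c) (hc₁ : c ≤ 1) (hb : 0 < b) :
    (a + b) * upperBeta c (a + 1) b = a * upperBeta c a b + c ^ a * (1 - c) ^ b := by
  linear_combination a * upperBeta_add_one_left_add_add_one_right a hc₀ hc₁ hb +
    mul_upperBeta_add_one_left_sub a hc₀ hc₁ hb

theorem add_mul_upperBeta_add_one_right (a : ℝ) (hc₀ : 0 < c) (hc₁ : c ≤ 1) (hb : 0 < b) :
    (a + b) * upperBeta c a (b + 1) = b * upperBeta c a b - c ^ a * (1 - c) ^ b := by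
  linear_combination b * upperBeta_add_one_left_add_add_one_right a hc₀ hc₁ hb -
    mul_upperBeta_add_one_left_sub a hc₀ hc₁ hb

theorem rpow_mul_upperBeta_le_add_left (a : ℝ) (hc₀ : 0 < c) (hc₁ : c ≤ 1) (hb : 0 < b)
    (hr : 0 ≤ r) :
    c ^ r * upperBeta c a b ≤ upperBeta c (a + r) b := by
  unfold upperBeta
  rw [← intervalIntegral.integral_const_mul]
  refine intervalIntegral.integral_mono_on_of_le_Ioo hc₁
    ((intervalIntegrable_upperBeta a hc₀ hb).const_mul _)
    (intervalIntegrable_upperBeta (a + r) hc₀ hb) fun t ht ↦ ?_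
  have ht₀ : 0 < t := hc₀.trans ht.1
  have ht₁ : 0 < 1 - t := sub_pos.2 ht.2
  have hle : c ^ r ≤ t ^ r := Real.rpow_le_rpow hc₀.le ht.1.le hr
  calc c ^ r * (t ^ (a - 1) * (1 - t) ^ (b - 1))
      ≤ t ^ r * (t ^ (a - 1) * (1 - t) ^ (b - 1)) := by gcongr
    _ = t ^ (a + r - 1) * (1 - t) ^ (b - 1) := by
      rw [add_sub_right_comm, Real.rpow_add ht₀]
      ring

theorem upperBeta_add_right_le_rpow_mul (a : ℝ) (hc₀ : 0 < c) (hc₁ : c ≤ 1) (hb : 0 < b)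
    (hr : 0 ≤ r) :
    upperBeta c a (b + r) ≤ (1 - c) ^ r * upperBeta c a b := by
  unfold upperBeta
  rw [← intervalIntegral.integral_const_mul]
  refine intervalIntegral.integral_mono_on_of_le_Ioo hc₁
    (intervalIntegrable_upperBeta a hc₀ (by positivity))
    ((intervalIntegrable_upperBeta a hc₀ hb).const_mul _) fun t ht ↦ ?_
  have ht₀ : 0 < t := hc₀.trans ht.1
  have ht₁ : 0 < 1 - t := sub_pos.2 ht.2
  have hle : (1 - t) ^ r ≤ (1 - c) ^ r :=
    Real.rpow_le_rpow ht₁.le (sub_le_sub_left ht.1.le 1) hr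
  calc t ^ (a - 1) * (1 - t) ^ (b + r - 1)
      = (1 - t) ^ r * (t ^ (a - 1) * (1 - t) ^ (b - 1)) := by
        rw [add_sub_right_comm, Real.rpow_add ht₁]
        ring
    _ ≤ (1 - c) ^ r * (t ^ (a - 1) * (1 - t) ^ (b - 1)) := by gcongr

end UpperBeta

section BetaFn

variable {a b : ℝ}

theorem half_rpow_mul_one_sub_half_rpow (a b : ℝ) :
    (1 / 2 : ℝ) ^ a * (1 - 1 / 2) ^ b = (1 / 2) ^ (a + b) := by
  rw [sub_half, ← Real.rpow_add one_half_pos]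

theorem betaFn_eq_upperBeta_half_add (ha : 0 < a) (hb : 0 < b) :
    betaFn a b = upperBeta (1 / 2) a b + upperBeta (1 / 2) b a := by
  rw [← upperBeta_add_upperBeta_swap one_half_pos one_half_lt_one ha hb, sub_half]

theorem betaFn_pos (ha : 0 < a) (hb : 0 < b) : 0 < betaFn a b := by
  rw [betaFn_eq_upperBeta_half_add ha hb]
  exact add_pos (upperBeta_pos a one_half_pos one_half_lt_one hb)
    (upperBeta_pos b one_half_pos one_half_lt_one ha)

theorem betaFn_comm (ha : 0 < a) (hb : 0 < b) : betaFn a b = betaFn b a := by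
  rw [betaFn_eq_upperBeta_half_add ha hb, betaFn_eq_upperBeta_half_add hb ha, add_comm]

theorem add_mul_betaFn_add_one_left (ha : 0 < a) (hb : 0 < b) :
    (a + b) * betaFn (a + 1) b = a * betaFn a b := by
  rw [betaFn_eq_upperBeta_half_add ha hb, betaFn_eq_upperBeta_half_add (by positivity) hb]
  have hleft := add_mul_upperBeta_add_one_left a one_half_pos one_half_lt_one.le hb
  have hright := add_mul_upperBeta_add_one_right b one_half_pos one_half_lt_one.le ha
  rw [half_rpow_mul_one_sub_half_rpow] at hleft hright
  rw [add_comm b a] at hright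
  linear_combination hleft + hright

/-- Start from the trivial case `a = b` and integrate by parts on the left. Raising one parameter
from `b` to `a` multiplies the boundary term by exactly `(1/2) ^ (a - b)`, the integral on the left
by at most and the integral on the right by at least this factor. -/
theorem mul_upperBeta_half_swap_le (hb : 0 < b) (hba : b ≤ a) :
    a * upperBeta (1 / 2) (b + 1) a ≤ b * upperBeta (1 / 2) (a + 1) b := by
  have ha : 0 < a := hb.trans_le hba
  have hparts := mul_upperBeta_add_one_left_sub b one_half_pos one_half_lt_one.le ha
  have hdiag := mul_upperBeta_add_one_left_sub b one_half_pos one_half_lt_one.le hb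
  have hlower := rpow_mul_upperBeta_le_add_left (b + 1) one_half_pos one_half_lt_one.le hb
    (sub_nonneg.2 hba)
  have hupper := upperBeta_add_right_le_rpow_mul b one_half_pos one_half_lt_one.le
    (by positivity : 0 < b + 1) (sub_nonneg.2 hba)
  rw [half_rpow_mul_one_sub_half_rpow] at hparts hdiag
  rw [show b + 1 + (a - b) = a + 1 by ring] at hlower hupper
  rw [sub_half] at hupper
  have hsplit : (1 / 2 : ℝ) ^ (b + a) = (1 / 2) ^ (a - b) * (1 / 2) ^ (b + b) := by
    rw [← Real.rpow_add one_half_pos]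
    ring_nf
  calc a * upperBeta (1 / 2) (b + 1) a
      = b * upperBeta (1 / 2) b (a + 1) + (1 / 2) ^ (b + a) := by linarith
    _ ≤ b * ((1 / 2) ^ (a - b) * upperBeta (1 / 2) b (b + 1)) + (1 / 2) ^ (b + a) := by gcongr
    _ = b * ((1 / 2) ^ (a - b) * upperBeta (1 / 2) (b + 1) b) := by
      linear_combination hsplit - (1 / 2 : ℝ) ^ (a - b) * hdiag
    _ ≤ b * upperBeta (1 / 2) (a + 1) b := by gcongr

theorem I_eq_upperBeta_div_betaFn (a b : ℝ) : I a b = upperBeta (1 / 2) a b / betaFn a b :=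
  one_div_mul_eq_div _ _

theorem one_sub_I (ha : 0 < a) (hb : 0 < b) : 1 - I a b = I b a := by
  rw [I_eq_upperBeta_div_betaFn, I_eq_upperBeta_div_betaFn, betaFn_comm hb ha,
    one_sub_div (betaFn_pos ha hb).ne', betaFn_eq_upperBeta_half_add ha hb, add_sub_cancel_left]

theorem I_add_one_left (ha : 0 < a) (hb : 0 < b) :
    I (a + 1) b = (a + b) * upperBeta (1 / 2) (a + 1) b / (a * betaFn a b) := by
  rw [← add_mul_betaFn_add_one_left ha hb, I_eq_upperBeta_div_betaFn,
    mul_div_mul_left _ _ (by positivity)]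

theorem I_add_one_left_eq_add (ha : 0 < a) (hb : 0 < b) :
    I (a + 1) b = I a b + (1 / 2) ^ (a + b) / (a * betaFn a b) := by
  have hB := betaFn_pos ha hb
  rw [I_add_one_left ha hb, I_eq_upperBeta_div_betaFn,
    add_mul_upperBeta_add_one_left a one_half_pos one_half_lt_one.le hb,
    half_rpow_mul_one_sub_half_rpow]
  field_simp

theorem I_le_I_add_one_left (ha : 0 < a) (hb : 0 < b) : I a b ≤ I (a + 1) b := by
  have hB := betaFn_pos ha hb
  rw [I_add_one_left_eq_add ha hb]
  exact le_add_of_nonneg_right (by positivity)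

theorem I_add_one_right_le_I (ha : 0 < a) (hb : 0 < b) : I a (b + 1) ≤ I a b := by
  rw [← one_sub_I hb ha, ← one_sub_I (by positivity) ha]
  exact sub_le_sub_left (I_le_I_add_one_left hb ha) 1

theorem I_add_one_left_swap_le (hb : 0 < b) (hba : b ≤ a) : I (b + 1) a ≤ I (a + 1) b := by
  have ha : 0 < a := hb.trans_le hba
  have hB := betaFn_pos ha hb
  rw [I_add_one_left ha hb, I_add_one_left hb ha, betaFn_comm hb ha, add_comm b a,
    div_le_div_iff₀ (by positivity) (by positivity)]
  have hU := mul_upperBeta_half_swap_le hb hba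
  calc (a + b) * upperBeta (1 / 2) (b + 1) a * (a * betaFn a b)
      = (a + b) * betaFn a b * (a * upperBeta (1 / 2) (b + 1) a) := by ring
    _ ≤ (a + b) * betaFn a b * (b * upperBeta (1 / 2) (a + 1) b) := by gcongr
    _ = (a + b) * upperBeta (1 / 2) (a + 1) b * (b * betaFn a b) := by ring

theorem half_le_I (hb : 0 < b) (hba : b ≤ a) : 1 / 2 ≤ I a b := by
  have ha : 0 < a := hb.trans_le hba
  have hB := betaFn_pos ha hb
  have hswap := I_add_one_left_swap_le hb hba
  rw [I_add_one_left_eq_add ha hb, I_add_one_left_eq_add hb ha, betaFn_comm hb ha,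
    add_comm b a, ← one_sub_I ha hb] at hswap
  have hstep : (1 / 2 : ℝ) ^ (a + b) / (a * betaFn a b) ≤ (1 / 2) ^ (a + b) / (b * betaFn a b) := by
    gcongr
  linarith

end BetaFn

theorem hFn_of_half_le {x : ℝ} (hx : 1 / 2 ≤ x) : hFn x = x :=
  max_eq_left (by linarith)

theorem hFn_one_sub (x : ℝ) : hFn (1 - x) = hFn x := by
  rw [hFn, hFn, sub_sub_cancel, max_comm]

theorem hFn_I_comm {a b : ℝ} (ha : 0 < a) (hb : 0 < b) : hFn (I a b) = hFn (I b a) := by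
  rw [← one_sub_I ha hb, hFn_one_sub]

theorem Rplus_comm {a b : ℝ} (ha : 0 < a) (hb : 0 < b) : Rplus a b = Rplus b a := by
  rw [Rplus, Rplus, hFn_I_comm ha hb, hFn_I_comm (by positivity : 0 < a + 1) hb,
    hFn_I_comm ha (by positivity : 0 < b + 1), max_comm]

theorem Rplus_of_le {a b : ℝ} (hb : 0 < b) (hba : b ≤ a) :
    Rplus a b = (1 / 2) ^ (a + b) / (a * betaFn a b) := by
  have ha : 0 < a := hb.trans_le hba
  have hI_left : 1 / 2 ≤ I (a + 1) b := half_le_I hb (hba.trans (lt_add_one a).le)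
  have hh_right : hFn (I a (b + 1)) ≤ hFn (I (a + 1) b) := by
    rw [hFn_of_half_le hI_left]
    refine max_le ((I_add_one_right_le_I ha hb).trans (I_le_I_add_one_left ha hb)) ?_
    rw [one_sub_I ha (by positivity)]
    exact I_add_one_left_swap_le hb hba
  rw [Rplus, max_eq_left (sub_le_sub_right hh_right _), hFn_of_half_le hI_left,
    hFn_of_half_le (half_le_I hb hba), I_add_one_left_eq_add ha hb, add_sub_cancel_left]

theorem Rplus_eq_general {a b : ℝ} (ha : 0 < a) (hb : 0 < b) :
    Rplus a b = (1 / 2) ^ (a + b) / (max a b * betaFn a b) ∧ 0 < Rplus a b := by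
  have heq : Rplus a b = (1 / 2) ^ (a + b) / (max a b * betaFn a b) := by
    rcases le_total b a with hba | hab
    · rw [max_eq_left hba, Rplus_of_le hb hba]
    · rw [max_eq_right hab, Rplus_comm ha hb, Rplus_of_le ha hab, betaFn_comm ha hb, add_comm]
  have hB := betaFn_pos ha hb
  exact ⟨heq, heq ▸ by positivity⟩

theorem Rplus_eq (a b : ℕ) (ha : 0 < a) (hb : 0 < b) :
    Rplus a b = (1 / 2 : ℝ) ^ (a + b) / (max (a : ℝ) (b : ℝ) * betaFn a b) ∧
      0 < Rplus a b := by
  exact_mod_cast Rplus_eq_general (Nat.cast_pos.2 ha) (Nat.cast_pos.2 hb)
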